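/- Let 1 ≤ p ≤ ∞, let s > 0 be real, and let m be a positive integer with 2m ≥ s. Then there exists a constant C > 0 such that ‖J_{−s} φ‖_p ≤ C · Σ_{|α| ≤ 2m} ‖∂^α φ‖_p for all φ ∈ 𝒮(ℝⁿ), where the sum extends over all multi-indices α of order at most 2m. -/

import Mathlib

open MeasureTheory Complex
open scoped FourierTransform ENNReal SchwartzMap

/-- The Bessel potential `J_z f = 𝓕⁻¹((1+|ξ|²)^(-z/2) · 𝓕 f)` of a function on `ℝⁿ`. -/
noncomputable def besselPotential (n : ℕ) (z : ℂ)
    (f : EuclideanSpace ℝ (Fin n) → ℂ) : EuclideanSpace ℝ (Fin n) → ℂ :=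
  𝓕⁻ (fun ξ => ((1 : ℂ) + (‖ξ‖ : ℂ) ^ 2) ^ (-z / 2) * 𝓕 f ξ)

/-- The partial derivative in the `j`-th coordinate direction. -/
noncomputable def pderivFun (n : ℕ) (j : Fin n)
    (f : EuclideanSpace ℝ (Fin n) → ℂ) : EuclideanSpace ℝ (Fin n) → ℂ :=
  fun x => fderiv ℝ f x (EuclideanSpace.single j (1 : ℝ))

/-- The iterated partial derivative `∂^α` associated to a multi-index `α`. -/
noncomputable def multiDeriv (n : ℕ) (α : Fin n → ℕ)
    (f : EuclideanSpace ℝ (Fin n) → ℂ) : EuclideanSpace ℝ (Fin n) → ℂ :=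
  (List.finRange n).foldr (fun j g => (pderivFun n j)^[α j] g) f

/-- The finset of multi-indices on `ℝⁿ` of order at most `N`. -/
noncomputable def multiIndicesLE (n N : ℕ) : Finset (Fin n → ℕ) :=
  (Fintype.piFinset fun _ : Fin n => Finset.range (N + 1)).filter fun α => ∑ j, α j ≤ N

section

variable {E : Type*} [NormedAddCommGroup E] [InnerProductSpace ℝ E] [FiniteDimensional ℝ E]
  [MeasurableSpace E] [BorelSpace E]

/-- Averaging the translates of a continuous function against a probability measure does not
increase its `L^p` norm. -/
theorem eLpNorm_integral_comp_add_le (μ : Measure E) [IsProbabilityMeasure μ] {f : E → ℂ}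
    (hf : Continuous f) {p : ℝ≥0∞} (hp : 1 ≤ p) :
    eLpNorm (fun x => ∫ y, f (x + y) ∂μ) p volume ≤ eLpNorm f p volume := by
  have hmean (x : E) {q : ℝ≥0∞} (hq : 1 ≤ q) :
      ‖∫ y, f (x + y) ∂μ‖ₑ ≤ eLpNorm (fun y => f (x + y)) q μ := by
    refine (enorm_integral_le_lintegral_enorm _).trans ?_
    rw [← eLpNorm_one_eq_lintegral_enorm]
    exact eLpNorm_le_eLpNorm_of_exponent_le hq (by fun_prop)
  rcases eq_or_ne p ∞ with rfl | hp_top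
  · have hbound (x : E) : ‖f x‖ₑ ≤ eLpNorm f ∞ volume := by
      have hopen : IsOpen {x | eLpNorm f ∞ volume < ‖f x‖ₑ} :=
        isOpen_lt continuous_const hf.enorm
      have hnull : volume {x | eLpNorm f ∞ volume < ‖f x‖ₑ} = 0 := by
        have := enorm_ae_le_eLpNormEssSup f (volume : Measure E)
        simpa [ae_iff, eLpNorm_exponent_top] using this
      have hempty := hopen.measure_eq_zero_iff volume |>.1 hnull
      by_contra! hx
      exact (hempty ▸ hx : x ∈ (∅ : Set E))
    rw [eLpNorm_exponent_top]
    refine essSup_le_of_ae_le _ (Filter.Eventually.of_forall fun x => (hmean x le_top).trans ?_)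
    rw [eLpNorm_exponent_top (μ := μ)]
    exact essSup_le_of_ae_le _ (Filter.Eventually.of_forall fun y => hbound (x + y))
  · have hp0 : p ≠ 0 := (zero_lt_one.trans_le hp).ne'
    have hr : 0 < p.toReal := ENNReal.toReal_pos hp0 hp_top
    rw [eLpNorm_eq_lintegral_rpow_enorm_toReal hp0 hp_top,
      eLpNorm_eq_lintegral_rpow_enorm_toReal hp0 hp_top]
    refine ENNReal.rpow_le_rpow ?_ (by positivity)
    calc ∫⁻ x, ‖∫ y, f (x + y) ∂μ‖ₑ ^ p.toReal
        ≤ ∫⁻ x, ∫⁻ y, ‖f (x + y)‖ₑ ^ p.toReal ∂μ := by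
          refine lintegral_mono fun x => ?_
          refine (ENNReal.rpow_le_rpow (hmean x hp) hr.le).trans_eq ?_
          rw [eLpNorm_eq_lintegral_rpow_enorm_toReal hp0 hp_top, ← ENNReal.rpow_mul,
            one_div_mul_cancel hr.ne', ENNReal.rpow_one]
      _ = ∫⁻ y, ∫⁻ x, ‖f (x + y)‖ₑ ^ p.toReal ∂volume ∂μ := by
          refine lintegral_lintegral_swap (Measurable.aemeasurable ?_)
          have : Continuous fun z : E × E => ‖f (z.1 + z.2)‖ₑ := by fun_prop
          exact this.measurable.pow_const _
      _ = ∫⁻ x, ‖f x‖ₑ ^ p.toReal := by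
          simp [lintegral_add_right_eq_self (fun x => ‖f x‖ₑ ^ p.toReal)]

/-- The Fourier multiplier given by the characteristic function of a probability measure is
averaging of translates. -/
theorem fourierInv_charFun_mul_fourier (μ : Measure E) [IsProbabilityMeasure μ] (ψ : 𝓢(E, ℂ))
    (x : E) :
    𝓕⁻ (fun ξ => charFun μ ((2 * Real.pi) • ξ) * 𝓕 (ψ : E → ℂ) ξ) x = ∫ y, ψ (x + y) ∂μ := by
  have hinv (z : E) : ψ z = ∫ ξ, exp (↑(2 * Real.pi * inner ℝ ξ z) * I) • 𝓕 (ψ : E → ℂ) ξ := by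
    rw [← Real.fourierInv_eq', ← SchwartzMap.fourier_coe, ← SchwartzMap.fourierInv_coe,
      FourierTransform.fourierInv_fourier_eq]
  rw [Real.fourierInv_eq']
  simp_rw [hinv (x + _)]
  rw [integral_integral_swap]
  · refine integral_congr_ae (Filter.Eventually.of_forall fun ξ => ?_)
    simp only [smul_eq_mul, charFun_apply]
    rw [integral_mul_const, ← mul_assoc, ← integral_const_mul]
    congr 2
    ext y
    rw [← Complex.exp_add, inner_add_right, inner_smul_right, real_inner_comm y ξ]
    push_cast
    ring_nf
  · have hint : Integrable (fun z : E × E => 𝓕 (ψ : E → ℂ) z.2) (μ.prod volume) := by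
      rw [← SchwartzMap.fourier_coe]
      exact (𝓕 ψ).integrable.comp_snd μ
    refine hint.mono ?_ (Filter.Eventually.of_forall fun z => ?_)
    · refine AEStronglyMeasurable.smul (Continuous.aestronglyMeasurable (f := fun z : E × E =>
        exp (↑(2 * Real.pi * inner ℝ z.2 (x + z.1)) * I)) ?_) hint.1
      fun_prop
    · simp only [Function.uncurry, norm_smul, norm_exp_ofReal_mul_I, one_mul, le_refl]

theorem integral_gammaMeasure_exp_neg_mul {a r : ℝ} (ha : 0 < a) (hr : 0 ≤ r) :
    ∫ u, Real.exp (-(r * u)) ∂(ProbabilityTheory.gammaMeasure a 1) = (1 + r) ^ (-a) := by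
  rw [ProbabilityTheory.gammaMeasure, integral_withDensity_eq_integral_toReal_smul]
  rotate_left
  · exact (ProbabilityTheory.measurable_gammaPDFReal a 1).ennreal_ofReal
  · exact Filter.Eventually.of_forall fun _ => ENNReal.ofReal_lt_top
  have hpdf : (fun u => (ProbabilityTheory.gammaPDF a 1 u).toReal • Real.exp (-(r * u))) =ᵐ[volume]
      (Set.Ioi (0 : ℝ)).indicator
        (fun u => (Real.Gamma a)⁻¹ * (u ^ (a - 1) * Real.exp (-((1 + r) * u)))) := by
    filter_upwards [compl_mem_ae_iff.2 (measure_singleton (0 : ℝ))] with u hu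
    rcases lt_or_gt_of_ne (show u ≠ 0 from hu) with h | h
    · rw [ProbabilityTheory.gammaPDF_of_neg h, Set.indicator_of_notMem (by simpa using h.le)]
      simp
    · have := Real.Gamma_pos_of_pos ha
      rw [ProbabilityTheory.gammaPDF_of_nonneg h.le, Set.indicator_of_mem (by simpa using h),
        ENNReal.toReal_ofReal (by positivity), smul_eq_mul, add_mul, neg_add, Real.exp_add]
      simp
      ring
  rw [integral_congr_ae hpdf, integral_indicator measurableSet_Ioi, integral_const_mul,
    Real.integral_rpow_mul_exp_neg_mul_Ioi ha (by linarith), one_div,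
    Real.inv_rpow (by linarith), Real.rpow_neg (by linarith)]
  have := (Real.Gamma_pos_of_pos ha).ne'
  field_simp

/-- For `a ≥ 0` the function `(1 + ‖ξ‖²)^(-a)` is, up to scaling of the variable, the
characteristic function of a probability measure. -/
theorem exists_charFun_eq_one_add_sq_cpow {a : ℝ} (ha : 0 ≤ a) :
    ∃ μ : Measure E, IsProbabilityMeasure μ ∧
      ∀ ξ : E, charFun μ ((2 * Real.pi) • ξ) = ((1 : ℂ) + (‖ξ‖ : ℂ) ^ 2) ^ (-(a : ℂ)) := by
  rcases ha.eq_or_lt with rfl | ha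
  · exact ⟨Measure.dirac 0, inferInstance, fun ξ => by simp⟩
  have := ProbabilityTheory.isProbabilityMeasure_gammaMeasure ha one_pos
  set γ := ProbabilityTheory.gammaMeasure a 1
  set g := ProbabilityTheory.stdGaussian E
  let T : ℝ × E → E := fun z => (√(2 * z.1) / (2 * Real.pi)) • z.2
  have hT : Continuous T := by fun_prop
  refine ⟨(γ.prod g).map T, Measure.isProbabilityMeasure_map hT.aemeasurable, fun ξ => ?_⟩
  have hpos : ∀ᵐ u ∂γ, 0 ≤ u := by
    rw [ae_iff]
    have : {u : ℝ | ¬ 0 ≤ u} = Set.Iio 0 := by ext; simp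
    rw [this, show γ = volume.withDensity (ProbabilityTheory.gammaPDF a 1) from rfl,
      withDensity_apply _ measurableSet_Iio, ProbabilityTheory.lintegral_gammaPDF_of_nonpos le_rfl]
  have hgauss : ∀ᵐ u ∂γ, ∫ z, exp (inner ℝ (T (u, z)) ((2 * Real.pi) • ξ) * I) ∂g =
      (Real.exp (-(‖ξ‖ ^ 2 * u)) : ℝ) := by
    filter_upwards [hpos] with u hu
    have h := ProbabilityTheory.charFun_stdGaussian (√(2 * u) • ξ)
    rw [charFun_apply] at h
    refine Eq.trans ?_ (h.trans ?_)
    · congr 1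
      ext z
      congr 3
      simp only [T, inner_smul_left, inner_smul_right]
      have := Real.pi_ne_zero
      simp
      field_simp
    · rw [norm_smul, Real.norm_of_nonneg (Real.sqrt_nonneg _)]
      push_cast
      congr 1
      rw [mul_pow, ← ofReal_pow, Real.sq_sqrt (by positivity)]
      push_cast
      ring
  rw [charFun_apply, integral_map hT.aemeasurable (by fun_prop), integral_prod,
    integral_congr_ae hgauss, integral_complex_ofReal,
    integral_gammaMeasure_exp_neg_mul ha (by positivity), ofReal_cpow (by positivity)]
  · push_cast
    rfl
  · refine (integrable_const (1 : ℂ)).mono (Continuous.aestronglyMeasurable (by fun_prop)) ?_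
    exact Filter.Eventually.of_forall fun z => by
      simp only [norm_exp_ofReal_mul_I, norm_one, le_refl]

end


theorem List.prod_map_pow_add {ι M : Type*} [Monoid M] (A : ι → M)
    (hA : ∀ i j, Commute (A i) (A j)) (α β : ι → ℕ) (l : List ι) :
    (l.map fun i => A i ^ (α + β) i).prod =
      (l.map fun i => A i ^ α i).prod * (l.map fun i => A i ^ β i).prod := by
  induction l with
  | nil => simp
  | cons i l ih =>
    have h : Commute (A i ^ β i) (l.map fun i => A i ^ α i).prod := by
      refine Commute.list_prod_right _ _ fun x hx => ?_
      obtain ⟨j, -, rfl⟩ := List.mem_map.1 hx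
      exact (hA i j).pow_pow _ _
    rw [List.map_cons, List.prod_cons, ih, Pi.add_apply, pow_add, mul_assoc,
      ← mul_assoc (A i ^ β i), h.eq]
    simp only [List.map_cons, List.prod_cons, mul_assoc]

theorem List.prod_map_pow_single {ι M : Type*} [DecidableEq ι] [Monoid M] (A : ι → M) (j : ι)
    (k : ℕ) {l : List ι} (hl : l.Nodup) (hj : j ∈ l) :
    (l.map fun i => A i ^ (Pi.single j k : ι → ℕ) i).prod = A j ^ k := by
  rw [List.prod_map_eq_pow_single j]
  · rw [List.count_eq_one_of_mem hl hj]; simp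
  · intro i hi _
    simp [hi]

section

open LineDeriv

variable {n : ℕ}

/-- The partial derivative in the `j`-th coordinate direction as an endomorphism of the Schwartz
space. -/
noncomputable def schwartzPDeriv (j : Fin n) :
    Module.End ℂ 𝓢(EuclideanSpace ℝ (Fin n), ℂ) :=
  (lineDerivOpCLM ℂ 𝓢(EuclideanSpace ℝ (Fin n), ℂ)
    (EuclideanSpace.single j (1 : ℝ))).toLinearMap

theorem schwartzPDeriv_apply (j : Fin n) (φ : 𝓢(EuclideanSpace ℝ (Fin n), ℂ)) :
    schwartzPDeriv j φ = ∂_{EuclideanSpace.single j (1 : ℝ)} φ := rfl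

theorem coe_schwartzPDeriv (j : Fin n) (φ : 𝓢(EuclideanSpace ℝ (Fin n), ℂ)) :
    ⇑(schwartzPDeriv j φ) = pderivFun n j φ := rfl

theorem fourier_schwartzPDeriv (j : Fin n) (φ : 𝓢(EuclideanSpace ℝ (Fin n), ℂ))
    (ξ : EuclideanSpace ℝ (Fin n)) :
    𝓕 (schwartzPDeriv j φ) ξ = 2 * Real.pi * I * ξ j * 𝓕 φ ξ := by
  rw [schwartzPDeriv_apply, SchwartzMap.fourier_lineDerivOp_eq, _root_.smul_apply,
    SchwartzMap.smulLeftCLM_apply_apply (by fun_prop)]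
  simp [mul_assoc, EuclideanSpace.inner_single_right]

theorem commute_schwartzPDeriv (i j : Fin n) :
    Commute (schwartzPDeriv i) (schwartzPDeriv j) := by
  refine LinearMap.ext fun φ => ?_
  apply (FourierTransform.fourierEquiv ℂ _).injective
  ext ξ
  simp only [FourierTransform.fourierEquiv_apply, Module.End.mul_apply, fourier_schwartzPDeriv]
  ring

/-- The iterated partial derivative `∂^α` as an endomorphism of the Schwartz space. -/
noncomputable def schwartzMultiDeriv (α : Fin n → ℕ) :
    Module.End ℂ 𝓢(EuclideanSpace ℝ (Fin n), ℂ) :=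
  ((List.finRange n).map fun j => schwartzPDeriv j ^ α j).prod

theorem coe_schwartzPDeriv_pow (j : Fin n) (k : ℕ) (φ : 𝓢(EuclideanSpace ℝ (Fin n), ℂ)) :
    ⇑((schwartzPDeriv j ^ k) φ) = (pderivFun n j)^[k] φ := by
  induction k with
  | zero => rfl
  | succ k ih =>
    rw [pow_succ', Module.End.mul_apply, coe_schwartzPDeriv, ih, Function.iterate_succ_apply']

theorem coe_schwartzMultiDeriv (α : Fin n → ℕ) (φ : 𝓢(EuclideanSpace ℝ (Fin n), ℂ)) :
    ⇑(schwartzMultiDeriv α φ) = multiDeriv n α φ := by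
  unfold schwartzMultiDeriv multiDeriv
  induction List.finRange n with
  | nil => rfl
  | cons j l ih =>
    rw [List.map_cons, List.prod_cons, Module.End.mul_apply, coe_schwartzPDeriv_pow, ih,
      List.foldr_cons]

theorem schwartzMultiDeriv_zero : schwartzMultiDeriv (0 : Fin n → ℕ) = 1 := by
  simp [schwartzMultiDeriv]

theorem schwartzMultiDeriv_add_single (α : Fin n → ℕ) (j : Fin n) (k : ℕ) :
    schwartzMultiDeriv (α + Pi.single j k) = schwartzMultiDeriv α * schwartzPDeriv j ^ k := by
  unfold schwartzMultiDeriv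
  rw [List.prod_map_pow_add _ commute_schwartzPDeriv,
    List.prod_map_pow_single _ _ _ (List.nodup_finRange n) (List.mem_finRange j)]

/-- The operator `1 - (2π)⁻² Δ` on the Schwartz space, whose symbol is `1 + ‖ξ‖²`. -/
noncomputable def oneSubLaplacian (n : ℕ) : Module.End ℂ 𝓢(EuclideanSpace ℝ (Fin n), ℂ) :=
  1 - ((2 * Real.pi : ℂ) ^ 2)⁻¹ • ∑ j, schwartzPDeriv j ^ 2

theorem fourier_oneSubLaplacian (φ : 𝓢(EuclideanSpace ℝ (Fin n), ℂ))
    (ξ : EuclideanSpace ℝ (Fin n)) :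
    𝓕 (oneSubLaplacian n φ) ξ = (1 + (‖ξ‖ : ℂ) ^ 2) * 𝓕 φ ξ := by
  have hsum : 𝓕 (∑ j, (schwartzPDeriv j ^ 2) φ) ξ =
      ∑ j, 𝓕 ((schwartzPDeriv j ^ 2) φ) ξ := by
    rw [← FourierTransform.fourierCLM_apply (R := ℂ), map_sum, _root_.sum_apply]
    rfl
  have hnorm : (‖ξ‖ : ℂ) ^ 2 = ∑ j, (ξ j : ℂ) ^ 2 := by
    rw [← ofReal_pow, EuclideanSpace.real_norm_sq_eq]
    push_cast
    rfl
  have hpi : (Real.pi : ℂ) ≠ 0 := ofReal_ne_zero.2 Real.pi_ne_zero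
  rw [oneSubLaplacian, LinearMap.sub_apply, LinearMap.smul_apply, LinearMap.sum_apply,
    Module.End.one_apply, sub_eq_add_neg, FourierTransform.fourier_add, ← neg_smul,
    FourierTransform.fourier_smul, _root_.add_apply, _root_.smul_apply, hsum, hnorm,
    add_mul, one_mul, smul_eq_mul, Finset.sum_mul, Finset.mul_sum]
  congr 1
  refine Finset.sum_congr rfl fun j _ => ?_
  rw [pow_two (schwartzPDeriv j), Module.End.mul_apply, fourier_schwartzPDeriv,
    fourier_schwartzPDeriv]
  field_simp
  simp

theorem fourier_oneSubLaplacian_pow (m : ℕ) (φ : 𝓢(EuclideanSpace ℝ (Fin n), ℂ))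
    (ξ : EuclideanSpace ℝ (Fin n)) :
    𝓕 ((oneSubLaplacian n ^ m) φ) ξ = (1 + (‖ξ‖ : ℂ) ^ 2) ^ m * 𝓕 φ ξ := by
  induction m with
  | zero => simp
  | succ m ih =>
    rw [pow_succ', Module.End.mul_apply, fourier_oneSubLaplacian, ih]
    ring

theorem mem_multiIndicesLE {N : ℕ} {α : Fin n → ℕ} :
    α ∈ multiIndicesLE n N ↔ ∑ j, α j ≤ N := by
  simp only [multiIndicesLE, Finset.mem_filter, Fintype.mem_piFinset, Finset.mem_range,
    and_iff_right_iff_imp]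
  intro h j
  exact Nat.lt_succ_of_le ((Finset.single_le_sum (fun _ _ => Nat.zero_le _)
    (Finset.mem_univ j)).trans h)

/-- The `W^{N,p}` norm `Σ_{|α| ≤ N} ‖∂^α φ‖_p`. -/
noncomputable def sobolevSum (p : ℝ≥0∞) (N : ℕ) (φ : 𝓢(EuclideanSpace ℝ (Fin n), ℂ)) : ℝ≥0∞ :=
  ∑ α ∈ multiIndicesLE n N, eLpNorm (multiDeriv n α φ) p volume

theorem eLpNorm_schwartzMultiDeriv_le_sobolevSum (p : ℝ≥0∞) {N : ℕ} {α : Fin n → ℕ}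
    (hα : ∑ j, α j ≤ N) (φ : 𝓢(EuclideanSpace ℝ (Fin n), ℂ)) :
    eLpNorm (schwartzMultiDeriv α φ) p volume ≤ sobolevSum p N φ := by
  rw [coe_schwartzMultiDeriv]
  exact Finset.single_le_sum (f := fun α => eLpNorm (multiDeriv n α φ) p volume)
    (fun _ _ => zero_le) (mem_multiIndicesLE.2 hα)

theorem sobolevSum_oneSubLaplacian_le {p : ℝ≥0∞} (hp : 1 ≤ p) (N : ℕ) :
    ∃ C : ℝ≥0∞, C ≠ ∞ ∧ ∀ φ : 𝓢(EuclideanSpace ℝ (Fin n), ℂ),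
      sobolevSum p N (oneSubLaplacian n φ) ≤ C * sobolevSum p (N + 2) φ := by
  set c : ℂ := ((2 * Real.pi : ℂ) ^ 2)⁻¹ with hc
  refine ⟨(multiIndicesLE n N).card * (1 + ‖c‖ₑ * n), by finiteness, fun φ => ?_⟩
  rw [mul_assoc, ← nsmul_eq_mul]
  refine Finset.sum_le_card_nsmul _ _ _ fun α hα => ?_
  have hα := mem_multiIndicesLE.1 hα
  have hexpand : multiDeriv n α (oneSubLaplacian n φ) =
      ⇑(schwartzMultiDeriv α φ) - c • ∑ j, ⇑(schwartzMultiDeriv (α + Pi.single j 2) φ) := by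
    rw [← coe_schwartzMultiDeriv, oneSubLaplacian]
    ext x
    simp [schwartzMultiDeriv_add_single, map_sum, hc]
  rw [hexpand]
  calc _ ≤ eLpNorm (schwartzMultiDeriv α φ) p volume +
        ‖c‖ₑ * ∑ j, eLpNorm (schwartzMultiDeriv (α + Pi.single j 2) φ) p volume := by
        refine (eLpNorm_sub_le (SchwartzMap.continuous _).aestronglyMeasurable ?_ hp).trans ?_
        · exact (Finset.aestronglyMeasurable_sum _ fun j _ =>
            (SchwartzMap.continuous _).aestronglyMeasurable).const_smul c
        · rw [eLpNorm_const_smul]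
          gcongr
          exact eLpNorm_sum_le (fun j _ => (SchwartzMap.continuous _).aestronglyMeasurable) hp
    _ ≤ sobolevSum p (N + 2) φ + ‖c‖ₑ * ∑ _j : Fin n, sobolevSum p (N + 2) φ := by
        gcongr with j
        · exact eLpNorm_schwartzMultiDeriv_le_sobolevSum p (by lia) φ
        · refine eLpNorm_schwartzMultiDeriv_le_sobolevSum p ?_ φ
          simpa [Finset.sum_add_distrib] using hα
    _ = _ := by
        simp
        ring

theorem sobolevSum_oneSubLaplacian_pow_le {p : ℝ≥0∞} (hp : 1 ≤ p) (m N : ℕ) :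
    ∃ C : ℝ≥0∞, C ≠ ∞ ∧ ∀ φ : 𝓢(EuclideanSpace ℝ (Fin n), ℂ),
      sobolevSum p N ((oneSubLaplacian n ^ m) φ) ≤ C * sobolevSum p (N + 2 * m) φ := by
  induction m with
  | zero => exact ⟨1, by simp, fun φ => by simp⟩
  | succ m ih =>
    obtain ⟨C₁, hC₁, h₁⟩ := ih
    obtain ⟨C₂, hC₂, h₂⟩ := sobolevSum_oneSubLaplacian_le (n := n) hp (N + 2 * m)
    refine ⟨C₁ * C₂, by finiteness, fun φ => ?_⟩
    rw [pow_succ, Module.End.mul_apply, mul_assoc]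
    exact (h₁ _).trans (by gcongr; exact h₂ φ)
theorem besselPotential_neg_eq (s : ℝ) (m : ℕ) (φ : 𝓢(EuclideanSpace ℝ (Fin n), ℂ)) :
    besselPotential n (-(s : ℂ)) φ =
      𝓕⁻ (fun ξ => ((1 : ℂ) + (‖ξ‖ : ℂ) ^ 2) ^ (-((m - s / 2 : ℝ) : ℂ)) *
        𝓕 (⇑((oneSubLaplacian n ^ m) φ)) ξ) := by
  unfold besselPotential
  congr 1
  ext ξ
  have hne : (1 : ℂ) + (‖ξ‖ : ℂ) ^ 2 ≠ 0 := by
    have : (1 : ℝ) + ‖ξ‖ ^ 2 ≠ 0 := by positivity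
    exact_mod_cast this
  rw [← SchwartzMap.fourier_coe, ← SchwartzMap.fourier_coe, fourier_oneSubLaplacian_pow,
    ← mul_assoc, ← cpow_natCast _ m, ← cpow_add _ _ hne]
  congr 2
  push_cast
  ring

end

/-- For `1 ≤ p ≤ ∞`, `s > 0` and a positive integer `m` with `2m ≥ s`, one has
`‖J_{-s} φ‖_p ≤ C · Σ_{|α| ≤ 2m} ‖∂^α φ‖_p` for all Schwartz `φ`. -/
theorem besselPotential_le_sum_multiDeriv (n : ℕ) (p : ℝ≥0∞) (hp : 1 ≤ p)
    (s : ℝ) (hs : 0 < s) (m : ℕ) (hm : 0 < m) (hms : s ≤ 2 * m) :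
    ∃ C : ℝ, 0 < C ∧ ∀ φ : 𝓢(EuclideanSpace ℝ (Fin n), ℂ),
      eLpNorm (besselPotential n (-(s : ℂ)) ⇑φ) p volume ≤
        ENNReal.ofReal C *
          ∑ α ∈ multiIndicesLE n (2 * m), eLpNorm (multiDeriv n α ⇑φ) p volume := by
  obtain ⟨C, hC, hle⟩ := sobolevSum_oneSubLaplacian_pow_le (n := n) hp m 0
  obtain ⟨μ, hμ, hchar⟩ := exists_charFun_eq_one_add_sq_cpow (E := EuclideanSpace ℝ (Fin n))
    (a := m - s / 2) (by linarith)
  refine ⟨C.toReal + 1, by positivity, fun φ => ?_⟩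
  set ψ := (oneSubLaplacian n ^ m) φ
  have hmean : besselPotential n (-(s : ℂ)) φ = fun x => ∫ y, ψ (x + y) ∂μ := by
    ext x
    rw [besselPotential_neg_eq s m, ← fourierInv_charFun_mul_fourier]
    simp_rw [hchar]
    rfl
  have hzero : eLpNorm ψ p volume ≤ sobolevSum p 0 ψ := by
    simpa [schwartzMultiDeriv_zero] using
      eLpNorm_schwartzMultiDeriv_le_sobolevSum p (α := 0) (N := 0) (by simp) ψ
  have hconst : C ≤ ENNReal.ofReal (C.toReal + 1) := by
    rw [ENNReal.le_ofReal_iff_toReal_le hC (by positivity)]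
    linarith
  calc eLpNorm (besselPotential n (-(s : ℂ)) φ) p volume
      ≤ eLpNorm ψ p volume := by
        rw [hmean]
        exact eLpNorm_integral_comp_add_le μ ψ.continuous hp
    _ ≤ C * sobolevSum p (0 + 2 * m) φ := hzero.trans (hle φ)
    _ ≤ ENNReal.ofReal (C.toReal + 1) * sobolevSum p (2 * m) φ := by
        rw [zero_add]
        gcongr
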